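/- arXiv:math/0611151 — 2 statements merged into one kernel-verified Lean document; each statement's English description precedes it below -/
import Mathlib

section
/- Let p be a prime with p ≡ 1 (mod 3). Then 2 is a cubic residue modulo p if and only if there exist integers A and B with p = A² + 27B². -/
/-!
Let `χ` be a cubic character of `𝔽_p` with values in the Eisenstein integers `ℤ[ω]`, so that `2` is
a cube modulo `p` iff `χ 2 = 1`. The Jacobi sum `J = J(χ, χ)` has norm `p`, and `J ≡ -1` modulo
`(1 - ω)²`, so that `J = a + 3bω` with `p = a² - 3ab + 9b²`, that is, `4p = (2a - 3b)² + 27b²`.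

The involution `x ↦ 1 - x` pairs equal terms of `J = ∑ χ(x) χ(1 - x)` and fixes only `x = 1/2`.
Hence `J ≡ χ(1/2)² = χ(2)` modulo `2`, and `χ 2 = 1` iff `b` is even. As the representation
`4p = L² + 27M²` is unique up to signs, `b` is even iff `p` itself has the form `A² + 27B²`.
-/

open Finset QuadraticAlgebra

section BinaryForms

theorem sq_eq_sq_of_sq_add_mul_sq_eq_mul_prime {p c D x y x' y' : ℤ} (hp : Prime p) (hc : c ≠ 0)
    (hcD : c ^ 2 < D) (h : x ^ 2 + D * y ^ 2 = c * p) (h' : x' ^ 2 + D * y' ^ 2 = c * p) :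
    y ^ 2 = y' ^ 2 := by
  wlog hdvd : p ∣ x * y' - x' * y generalizing x'
  · have hmul : p ∣ (x * y' - x' * y) * (x * y' + x' * y) :=
      ⟨c * (y' ^ 2 - y ^ 2), by linear_combination y' ^ 2 * h - y ^ 2 * h'⟩
    refine this (x' := -x') (by rwa [neg_sq]) ?_
    simpa using (hp.dvd_or_dvd hmul).resolve_left hdvd
  obtain ⟨k, hk⟩ := hdvd
  have brahmagupta : (x * x' + D * y * y') ^ 2 + D * k ^ 2 * p ^ 2 = c ^ 2 * p ^ 2 := by
    linear_combination
      (x' ^ 2 + D * y' ^ 2) * h + c * p * h' - D * (x * y' - x' * y + p * k) * hk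
  have hk0 : k = 0 := by
    by_contra hk0
    have hk1 : 1 ≤ k ^ 2 := by have := sq_pos_of_ne_zero hk0; lia
    have hp2 : 0 < p ^ 2 := sq_pos_of_ne_zero hp.ne_zero
    have hDk : D * k ^ 2 ≤ c ^ 2 :=
      le_of_mul_le_mul_right (by linarith [sq_nonneg (x * x' + D * y * y')]) hp2
    have hD : D ≤ D * k ^ 2 := le_mul_of_one_le_right (by linarith [sq_nonneg c]) hk1
    linarith
  have hcross : x * y' = x' * y := by linear_combination hk + p * hk0
  refine mul_left_cancel₀ (mul_ne_zero hc hp.ne_zero) ?_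
  linear_combination y' ^ 2 * h - y ^ 2 * h' - (x * y' + x' * y) * hcross

theorem even_iff_exists_eq_sq_add_twenty_seven_mul_sq {p a b : ℤ} (hp : Prime p)
    (h : p = a ^ 2 - 3 * a * b + 9 * b ^ 2) :
    Even b ↔ ∃ A B : ℤ, p = A ^ 2 + 27 * B ^ 2 := by
  constructor
  · rintro ⟨c, rfl⟩
    exact ⟨a - 3 * c, c, by rw [h]; ring⟩
  · rintro ⟨A, B, hAB⟩
    have hb : b ^ 2 = (2 * B) ^ 2 :=
      sq_eq_sq_of_sq_add_mul_sq_eq_mul_prime (c := 4) (D := 27) (x := 2 * a - 3 * b) (x' := 2 * A)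
        hp (by norm_num) (by norm_num) (by rw [h]; ring) (by rw [hAB]; ring)
    rcases sq_eq_sq_iff_eq_or_eq_neg.mp hb with rfl | rfl <;> simp

end BinaryForms

section PowerResidues

theorem exists_pow_modEq_iff_exists_zmod_pow_eq (m n : ℕ) (c : ℤ) :
    (∃ x : ℤ, x ^ n ≡ c [ZMOD m]) ↔ ∃ x : ZMod m, x ^ n = c := by
  simp [ZMod.intCast_surjective.exists, ← ZMod.intCast_eq_intCast_iff]

variable {M R : Type*} [CommMonoid M] [CommMonoidWithZero R]

theorem orderOf_mulChar_apply_generator (χ : MulChar M R) {g : Mˣ}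
    (hg : ∀ u, u ∈ Subgroup.zpowers g) : orderOf (χ g) = orderOf χ := by
  refine orderOf_eq_orderOf_iff.mpr fun n ↦ ?_
  rw [MulChar.eq_iff hg, MulChar.pow_apply_coe, MulChar.one_apply_coe]

theorem mulChar_apply_eq_one_iff_exists_pow_eq [Finite Mˣ] [IsCyclic Mˣ] (χ : MulChar M R)
    (u : Mˣ) : χ u = 1 ↔ ∃ x : M, x ^ orderOf χ = u := by
  constructor
  · intro hu
    obtain ⟨g, hg⟩ := IsCyclic.exists_generator (α := Mˣ)
    obtain ⟨k, rfl⟩ := mem_powers_iff_mem_zpowers.mpr (hg u)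
    have hk : orderOf χ ∣ k := by
      rw [← orderOf_mulChar_apply_generator χ hg]
      exact orderOf_dvd_of_pow_eq_one (by simpa using hu)
    obtain ⟨m, rfl⟩ := hk
    exact ⟨(g ^ m : Mˣ), by push_cast; rw [← pow_mul, mul_comm]⟩
  · rintro ⟨x, hx⟩
    have hn : orderOf χ ≠ 0 := χ.orderOf_pos.ne'
    have hxu : IsUnit x := (isUnit_pow_iff hn).mp (hx ▸ u.isUnit)
    rw [← hx, map_pow, ← χ.pow_apply' hn, pow_orderOf_eq_one, MulChar.one_apply hxu]

end PowerResidues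

section JacobiSums

theorem jacobiSum_mul_jacobiSum_inv_of_charZero {F R : Type*} [Field F] [Fintype F] [CommRing R]
    [IsDomain R] [CharZero R] {χ φ : MulChar F R} (hχ : χ ≠ 1) (hφ : φ ≠ 1) (hχφ : χ * φ ≠ 1) :
    jacobiSum χ φ * jacobiSum χ⁻¹ φ⁻¹ = Fintype.card F := by
  let f : R →+* FractionRing R := algebraMap R (FractionRing R)
  have hf : Function.Injective f := IsFractionRing.injective R (FractionRing R)
  have hchar : ringChar (FractionRing R) ≠ ringChar F := by
    rw [ringChar.eq_zero]
    exact (CharP.ringChar_ne_zero_of_finite F).symm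
  have hmul := jacobiSum_mul_jacobiSum_inv hchar ((MulChar.ringHomComp_ne_one_iff hf).mpr hχ)
    ((MulChar.ringHomComp_ne_one_iff hf).mpr hφ)
    (by rwa [← MulChar.ringHomComp_mul, MulChar.ringHomComp_ne_one_iff hf])
  apply hf
  simpa only [MulChar.ringHomComp_inv, jacobiSum_ringHomComp, map_mul, map_natCast] using hmul

theorem two_dvd_jacobiSum_self_sub {S R : Type*} [CommRing S] [Fintype S] [CommRing R]
    (χ : MulChar S R) {c : S} (hc : 2 * c = 1) : 2 ∣ jacobiSum χ χ - χ c ^ 2 := by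
  classical
  have hfix {x : S} (hx : 1 - x = x) : x = c := by linear_combination -x * hc - c * hx
  have hc' : 1 - c = c := by linear_combination -hc
  rw [← Ideal.mem_span_singleton, ← Ideal.Quotient.eq, jacobiSum, ← add_sum_erase _ _ (mem_univ c),
    hc', ← sq, map_add, map_sum, add_eq_left]
  refine sum_involution (fun x _ ↦ 1 - x) ?_ ?_ ?_ fun x _ ↦ sub_sub_cancel 1 x
  · intro x _
    rw [sub_sub_cancel, mul_comm (χ (1 - x)), ← map_add, ← two_mul,
      Ideal.Quotient.eq_zero_iff_mem]
    exact Ideal.mul_mem_right _ _ (Ideal.mem_span_singleton_self 2)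
  · exact fun x hx _ h ↦ ne_of_mem_erase hx (hfix h)
  · intro x hx
    refine mem_erase.mpr ⟨fun h ↦ ne_of_mem_erase hx ?_, mem_univ _⟩
    linear_combination hc' - h

theorem two_dvd_jacobiSum_self_sub_apply_two {F R : Type*} [Field F] [Fintype F] [CommRing R]
    {χ : MulChar F R} (hχ : χ ^ 3 = 1) (h2 : (2 : F) ≠ 0) : 2 ∣ jacobiSum χ χ - χ 2 := by
  have hcube : χ 2⁻¹ ^ 3 = 1 := by
    rw [← χ.pow_apply' three_ne_zero, hχ, MulChar.one_apply (inv_ne_zero h2).isUnit]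
  have hinv : χ 2 * χ 2⁻¹ = 1 := by rw [← map_mul, mul_inv_cancel₀ h2, map_one]
  have hsq : χ 2⁻¹ ^ 2 = χ 2 := by
    linear_combination χ 2 * hcube - χ 2⁻¹ ^ 2 * hinv
  exact hsq ▸ two_dvd_jacobiSum_self_sub χ (mul_inv_cancel₀ h2)

end JacobiSums

/-- The Eisenstein integers `ℤ[ω]`, where `ω² = -1 - ω`: the value ring of cubic characters. -/
abbrev EisensteinInt : Type := QuadraticAlgebra ℤ (-1) (-1)

namespace EisensteinInt

theorem norm_eq (z : EisensteinInt) : norm z = z.re ^ 2 - z.re * z.im + z.im ^ 2 := by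
  rw [norm_def]; ring

theorem four_mul_norm (z : EisensteinInt) :
    4 * norm z = (2 * z.re - z.im) ^ 2 + 3 * z.im ^ 2 := by
  rw [norm_eq]; ring

theorem norm_nonneg (z : EisensteinInt) : 0 ≤ norm z := by
  linarith [four_mul_norm z, sq_nonneg (2 * z.re - z.im), sq_nonneg z.im]

theorem eq_zero_of_norm_eq_zero {z : EisensteinInt} (hz : norm z = 0) : z = 0 := by
  have him : z.im = 0 := by
    rw [← sq_eq_zero_iff]
    linarith [four_mul_norm z, sq_nonneg (2 * z.re - z.im), sq_nonneg z.im]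
  have hre : z.re = 0 := by simpa [norm_eq, him] using hz
  ext <;> assumption

instance : NoZeroDivisors EisensteinInt where
  eq_zero_or_eq_zero_of_mul_eq_zero {z w} hzw := by
    have hnorm : norm z * norm w = 0 := by rw [← map_mul, hzw, QuadraticAlgebra.norm_zero]
    exact (mul_eq_zero.mp hnorm).imp eq_zero_of_norm_eq_zero eq_zero_of_norm_eq_zero

instance : IsDomain EisensteinInt := NoZeroDivisors.to_isDomain _

theorem isPrimitiveRoot_omega : IsPrimitiveRoot (ω : EisensteinInt) 3 := by
  have : Fact (Nat.Prime 3) := ⟨Nat.prime_three⟩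
  rw [IsPrimitiveRoot.iff_orderOf, orderOf_eq_prime_iff]
  exact ⟨by ext <;> simp [pow_succ], fun h ↦ by simpa using congrArg QuadraticAlgebra.im h⟩

theorem eq_one_iff_even_im_of_pow_three_eq_one {z : EisensteinInt} (hz : z ^ 3 = 1) :
    z = 1 ↔ Even z.im := by
  obtain ⟨k, hk, rfl⟩ := isPrimitiveRoot_omega.eq_pow_of_pow_eq_one hz
  interval_cases k <;> simp [QuadraticAlgebra.ext_iff, sq]

theorem mul_star_self_of_isUnit {z : EisensteinInt} (hz : IsUnit z) : z * star z = 1 := by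
  have hnorm : norm z = 1 :=
    (Int.isUnit_eq_one_or (isUnit_iff_norm_isUnit.mp hz)).resolve_right
      fun h ↦ by linarith [norm_nonneg z]
  rw [← algebraMap_norm_eq_mul_star, hnorm, map_one]

theorem star_mulChar_eq_inv {S : Type*} [CommRing S] (χ : MulChar S EisensteinInt) :
    star χ = χ⁻¹ := by
  rw [eq_comm, inv_eq_iff_mul_eq_one]
  ext1 u
  rw [MulChar.mul_apply, MulChar.star_apply, MulChar.one_apply_coe,
    mul_star_self_of_isUnit (u.isUnit.map χ)]

section CubicCharacters

variable {F : Type*} [Field F] [Fintype F] {χ φ : MulChar F EisensteinInt}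

theorem norm_jacobiSum (hχ : χ ≠ 1) (hφ : φ ≠ 1) (hχφ : χ * φ ≠ 1) :
    norm (jacobiSum χ φ) = Fintype.card F := by
  have hstar : jacobiSum χ⁻¹ φ⁻¹ = star (jacobiSum χ φ) := by
    rw [← star_mulChar_eq_inv, ← star_mulChar_eq_inv]
    exact jacobiSum_ringHomComp χ φ (starRingEnd EisensteinInt)
  have hmul := jacobiSum_mul_jacobiSum_inv_of_charZero hχ hφ hχφ
  rw [hstar, ← algebraMap_norm_eq_mul_star] at hmul
  exact algebraMap_injective (by rw [hmul, map_natCast])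

theorem three_dvd_im_jacobiSum (hχ : orderOf χ = 3) (hφ : φ ^ 3 = 1) :
    3 ∣ (jacobiSum χ φ).im := by
  obtain ⟨z, -, hz⟩ := exists_jacobiSum_eq_neg_one_add (by norm_num)
    (hχ ▸ pow_orderOf_eq_one χ) hφ (hχ ▸ χ.orderOf_dvd_card_sub_one) isPrimitiveRoot_omega
  have homega : (ω - 1 : EisensteinInt) ^ 2 = ⟨0, -3⟩ := by ext <;> simp [sq]
  rw [hz, homega]
  exact ⟨z.im - z.re, by simp; ring⟩

theorem exists_jacobiSum_self_eq (hχ : orderOf χ = 3) :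
    ∃ a b : ℤ, jacobiSum χ χ = ⟨a, 3 * b⟩ ∧ Fintype.card F = a ^ 2 - 3 * a * b + 9 * b ^ 2 := by
  have hχ1 : χ ≠ 1 := by rintro rfl; simp at hχ
  have hχ2 : χ * χ ≠ 1 := sq χ ▸ pow_ne_one_of_lt_orderOf two_ne_zero (by lia)
  obtain ⟨b, hb⟩ := three_dvd_im_jacobiSum hχ (hχ ▸ pow_orderOf_eq_one χ)
  refine ⟨(jacobiSum χ χ).re, b, by rw [← hb], ?_⟩
  rw [← norm_jacobiSum hχ1 hχ1 hχ2, norm_eq, hb]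
  ring

theorem apply_two_eq_one_iff_even_im_jacobiSum (hχ : χ ^ 3 = 1) (h2 : (2 : F) ≠ 0) :
    χ 2 = 1 ↔ Even (jacobiSum χ χ).im := by
  have hcube : χ 2 ^ 3 = 1 := by
    rw [← χ.pow_apply' three_ne_zero, hχ, MulChar.one_apply h2.isUnit]
  obtain ⟨w, hw⟩ := two_dvd_jacobiSum_self_sub_apply_two hχ h2
  have him : (jacobiSum χ χ).im - (χ 2).im = 2 * w.im := by
    simpa [two_mul] using congrArg QuadraticAlgebra.im hw
  rw [eq_one_iff_even_im_of_pow_three_eq_one hcube, Int.even_iff, Int.even_iff]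
  lia

end CubicCharacters

end EisensteinInt

open EisensteinInt

/-- Euler's conjecture (proved by Gauss): for a prime `p ≡ 1 (mod 3)`,
`2` is a cubic residue mod `p` iff `p = A² + 27B²` for some integers `A, B`. -/
theorem two_cubic_residue_iff (p : ℕ) (hp : p.Prime) (hp3 : p % 3 = 1) :
    (∃ x : ℤ, x ^ 3 ≡ 2 [ZMOD (p : ℤ)]) ↔ ∃ A B : ℤ, (p : ℤ) = A ^ 2 + 27 * B ^ 2 := by
  have : Fact p.Prime := ⟨hp⟩
  have h2 : (2 : ZMod p) ≠ 0 := by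
    refine Ring.two_ne_zero ?_
    rw [ZMod.ringChar_zmod_n]
    rintro rfl
    simp at hp3
  obtain ⟨χ, hχ⟩ : ∃ χ : MulChar (ZMod p) EisensteinInt, orderOf χ = 3 :=
    MulChar.exists_mulChar_orderOf (ZMod p) (by rw [ZMod.card]; lia) isPrimitiveRoot_omega
  obtain ⟨a, b, hJ, hcard⟩ := exists_jacobiSum_self_eq hχ
  rw [ZMod.card] at hcard
  calc
    (∃ x : ℤ, x ^ 3 ≡ 2 [ZMOD (p : ℤ)]) ↔ ∃ x : ZMod p, x ^ 3 = 2 :=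
      mod_cast exists_pow_modEq_iff_exists_zmod_pow_eq p 3 2
    _ ↔ χ 2 = 1 := by
      simpa [hχ] using (mulChar_apply_eq_one_iff_exists_pow_eq χ (Units.mk0 2 h2)).symm
    _ ↔ Even (jacobiSum χ χ).im :=
      apply_two_eq_one_iff_even_im_jacobiSum (hχ ▸ pow_orderOf_eq_one χ) h2
    _ ↔ Even b := by simp [hJ, Int.even_mul, show ¬Even (3 : ℤ) by decide]
    _ ↔ ∃ A B : ℤ, (p : ℤ) = A ^ 2 + 27 * B ^ 2 :=
      even_iff_exists_eq_sq_add_twenty_seven_mul_sq (Nat.prime_iff_prime_int.mp hp) hcard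
end

section
/- Let p be a prime with p ≡ 1 (mod 3) and let L, M be integers with 4p = L² + 27M². Then 3 is a cubic residue modulo p if and only if 3 divides M. -/
/-!
Let `χ` be a cubic character of `𝔽_p` and `ω` a primitive cube root of unity. The Jacobi sum
`J(χ, χ) = a + 3vω` has norm `p`, so `4p = (2a - 3v)² + 27v²`, and since such a representation is
unique, `v = ±M`. Comparing the cubes `p J(χ, χ)` and `p J(χ², χ²)` of the two cubic Gauss sums,
written as Lagrange resolvents of the three cubic Gauss periods, shows that the product `Δ` of the
differences of the periods is `p v`. Modulo `3`, Frobenius permutes the periods through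
multiplication by `χ(3)`, while `Δ ≡ (x - y) - (x³ - y³)` for the periods `x, y, z`, whose sum is
`-1`. Hence `v ≡ Δ` vanishes modulo `3` if `χ(3) = 1`, and is `±(x + y + z) ≡ ±1` otherwise.
-/

open Finset

lemma sq_eq_sq_of_mul_prime_eq_sq_add_mul_sq {p m d x y z w : ℤ} (hp : Prime p) (hm : m ≠ 0)
    (hd : m ^ 2 < d) (hxy : m * p = x ^ 2 + d * y ^ 2) (hzw : m * p = z ^ 2 + d * w ^ 2) :
    w ^ 2 = y ^ 2 := by
  have eq_zero_of_norm_eq (u k : ℤ) (h : (m * p) ^ 2 = u ^ 2 + d * (p * k) ^ 2) : k = 0 := by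
    by_contra hk
    have hk : 1 ≤ k ^ 2 := by have := sq_pos_of_ne_zero hk; omega
    have hp : 0 < p ^ 2 := sq_pos_of_ne_zero hp.ne_zero
    nlinarith [sq_nonneg u, mul_le_mul_of_nonneg_left hk (mul_nonneg (sq_nonneg m) hp.le)]
  have hdvd : p ∣ (x * w - y * z) * (x * w + y * z) :=
    ⟨m * (w ^ 2 - y ^ 2), by linear_combination y ^ 2 * hzw - w ^ 2 * hxy⟩
  have hprod : (x * w - y * z) * (x * w + y * z) = 0 := by
    rcases hp.dvd_or_dvd hdvd with ⟨k, hk⟩ | ⟨k, hk⟩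
    · rw [hk, eq_zero_of_norm_eq (x * z + d * y * w) k
        (by rw [← hk]; linear_combination m * p * hxy + (x ^ 2 + d * y ^ 2) * hzw)]
      simp
    · rw [hk, eq_zero_of_norm_eq (x * z - d * y * w) k
        (by rw [← hk]; linear_combination m * p * hxy + (x ^ 2 + d * y ^ 2) * hzw)]
      simp
  have : m * p * (w ^ 2 - y ^ 2) = 0 := by linear_combination hprod + w ^ 2 * hxy - y ^ 2 * hzw
  exact sub_eq_zero.mp ((mul_eq_zero.mp this).resolve_left (mul_ne_zero hm hp.ne_zero))

lemma exists_pow_orderOf_eq_iff_mulChar_apply_eq_one {F R : Type*} [Field F] [Finite F]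
    [CommMonoidWithZero R] (χ : MulChar F R) {y : F} (hy : y ≠ 0) :
    (∃ x, x ^ orderOf χ = y) ↔ χ y = 1 := by
  have pow_orderOf_apply (u : Fˣ) : χ u ^ orderOf χ = 1 := by
    rw [← MulChar.pow_apply_coe, pow_orderOf_eq_one, MulChar.one_apply_coe]
  constructor
  · rintro ⟨x, rfl⟩
    have hx : x ≠ 0 := by
      rintro rfl
      exact hy (zero_pow χ.orderOf_pos.ne')
    rw [map_pow]
    exact pow_orderOf_apply (Units.mk0 x hx)
  · intro h
    obtain ⟨g, hg⟩ := IsCyclic.exists_generator (α := Fˣ)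
    obtain ⟨n, hn⟩ := (mem_powers_iff_mem_zpowers (x := g)).mpr (hg (Units.mk0 y hy))
    have hgn : (g : F) ^ n = y := by simpa using congrArg Units.val hn
    have hχn : χ ^ n = 1 := by
      rw [MulChar.eq_iff hg, MulChar.pow_apply_coe, MulChar.one_apply_coe, ← map_pow, hgn, h]
    obtain ⟨k, rfl⟩ := orderOf_dvd_of_pow_eq_one hχn
    exact ⟨(g : F) ^ k, by rw [← hgn, ← pow_mul, mul_comm]⟩

section MulChar

variable {F R : Type*} [Field F] [CommRing R]

lemma natCast_card_eq_one_of_orderOf_mulChar_eq [Fintype F] {χ : MulChar F R} {n : ℕ}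
    (hχ : orderOf χ = n) (S : Type*) [Ring S] [CharP S n] : (Fintype.card F : S) = 1 := by
  have h := (CharP.cast_eq_zero_iff S n _).mpr (hχ ▸ χ.orderOf_dvd_card_sub_one)
  rwa [Nat.cast_sub Fintype.card_pos, Nat.cast_one, sub_eq_zero] at h

lemma natCast_orderOf_mulChar_ne_zero [Finite F] (χ : MulChar F R) : (orderOf χ : F) ≠ 0 := by
  have := Fintype.ofFinite F
  intro h
  obtain ⟨k, hk⟩ := χ.orderOf_dvd_card_sub_one
  have hcard : ((Fintype.card F - 1 : ℕ) : F) = -1 := by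
    rw [Nat.cast_sub Fintype.card_pos, Nat.cast_card_eq_zero, Nat.cast_one, zero_sub]
  rw [hk, Nat.cast_mul, h, zero_mul] at hcard
  exact one_ne_zero (neg_eq_zero.mp hcard.symm)

lemma jacobiSum_mul_jacobiSum_inv_of_isDomain [Fintype F] [IsDomain R] [CharZero R]
    {χ φ : MulChar F R} (hχ : χ ≠ 1) (hφ : φ ≠ 1) (hχφ : χ * φ ≠ 1) :
    jacobiSum χ φ * jacobiSum χ⁻¹ φ⁻¹ = Fintype.card F := by
  have hinj := IsFractionRing.injective R (FractionRing R)
  have : CharZero (FractionRing R) := charZero_of_injective_algebraMap hinj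
  have hchar : ringChar (FractionRing R) ≠ ringChar F := by
    rw [ringChar.eq_zero]
    exact (CharP.ringChar_ne_zero_of_finite F).symm
  apply hinj
  rw [map_mul, ← jacobiSum_ringHomComp, ← jacobiSum_ringHomComp, ← MulChar.ringHomComp_inv,
    ← MulChar.ringHomComp_inv, map_natCast]
  refine jacobiSum_mul_jacobiSum_inv hchar ?_ ?_ ?_
  · exact (MulChar.ringHomComp_ne_one_iff hinj).mpr hχ
  · exact (MulChar.ringHomComp_ne_one_iff hinj).mpr hφ
  · rwa [← MulChar.ringHomComp_mul, MulChar.ringHomComp_ne_one_iff hinj]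

end MulChar

section GaussPeriod

/-- The Gauss period of the fibre `χ = c` of a multiplicative character `χ`, that is, the sum of the
additive character `ψ` over this fibre. For `c` a value of `χ` on units, the fibre is a coset of the
kernel of `χ`; periods are indexed by the value `c` rather than by a representative of the coset. -/
noncomputable def gaussPeriod {A R S : Type*} [CommRing A] [Fintype A] [CommMonoidWithZero R]
    [CommRing S] (χ : MulChar A R) (ψ : AddChar A S) (c : R) : S :=
  open Classical in ∑ x with χ x = c, ψ x

lemma map_gaussPeriod {A R S T : Type*} [CommRing A] [Fintype A] [CommMonoidWithZero R]
    [CommRing S] [CommRing T] (φ : S →+* T) (χ : MulChar A R) (ψ : AddChar A S) (c : R) :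
    φ (gaussPeriod χ ψ c) = gaussPeriod χ ((φ : S →* T).compAddChar ψ) c := by
  simp [gaussPeriod]

lemma gaussPeriod_pow_char {A R S : Type*} [CommRing A] [Fintype A] [CommMonoidWithZero R]
    [CommRing S] (q : ℕ) [Fact q.Prime] [CharP S q] (hq : IsUnit (q : A)) (χ : MulChar A R)
    (ψ : AddChar A S) (c : R) :
    gaussPeriod χ ψ c ^ q = gaussPeriod χ ψ (c * χ q) := by
  classical
  have mul_apply_right (x : A) : χ (x * q) = c * χ q ↔ χ x = c := by
    rw [map_mul, (hq.map χ).mul_left_inj]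
  simp only [gaussPeriod, sum_pow_char, sum_filter]
  rw [← Equiv.sum_comp hq.unit.mulRight fun x ↦ if χ x = c * χ q then ψ x else 0]
  refine sum_congr rfl fun x _ ↦ ?_
  simp only [Units.mulRight_apply, hq.unit_spec, mul_apply_right]
  rw [ite_pow, zero_pow (NeZero.ne q), ← AddChar.map_nsmul_eq_pow, nsmul_eq_mul, mul_comm]

variable {F R : Type*} [Field F] [Fintype F] [CommRing R] [IsDomain R]

lemma gaussSum_pow_eq_sum_gaussPeriod {χ : MulChar F R} {n k : ℕ} [NeZero n] (hχ : χ ^ n = 1)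
    (hk : k ≠ 0) {ω : R} (hω : IsPrimitiveRoot ω n) (ψ : AddChar F R) :
    gaussSum (χ ^ k) ψ = ∑ i ∈ range n, (ω ^ i) ^ k * gaussPeriod χ ψ (ω ^ i) := by
  classical
  simp only [gaussSum, gaussPeriod, sum_filter, mul_sum, MulChar.pow_apply' χ hk]
  rw [sum_comm]
  refine sum_congr rfl fun x _ ↦ ?_
  rcases eq_or_ne x 0 with rfl | hx
  · simp [χ.map_zero, hk, hω.ne_zero (NeZero.ne n), eq_comm (a := (0 : R))]
  · obtain ⟨j, hj, hχx⟩ := MulChar.exists_apply_eq_pow hχ hω hx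
    rw [sum_eq_single_of_mem j (mem_range.mpr hj), hχx, if_pos rfl]
    intro i hi hij
    rw [if_neg, mul_zero]
    rw [hχx]
    exact fun h ↦ hij (hω.pow_inj (mem_range.mp hi) hj h.symm)

end GaussPeriod

section CubicIdentities

variable {R : Type*} [CommRing R]

lemma one_add_self_add_sq_eq_zero [IsDomain R] {ω : R} (hω : IsPrimitiveRoot ω 3) :
    1 + ω + ω ^ 2 = 0 := by
  simpa [sum_range_succ] using hω.geom_sum_eq_zero (by norm_num)

lemma exists_eq_add_mul_of_mem_adjoin {ω z : R} (hω : 1 + ω + ω ^ 2 = 0)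
    (hz : z ∈ Algebra.adjoin ℤ {ω}) : ∃ a b : ℤ, z = a + b * ω := by
  induction hz using Algebra.adjoin_induction with
  | mem x hx => exact ⟨0, 1, by simpa using hx⟩
  | algebraMap n => exact ⟨n, 0, by simp⟩
  | add x y _ _ hx hy =>
    obtain ⟨⟨a, b, rfl⟩, c, d, rfl⟩ := And.intro hx hy
    exact ⟨a + c, b + d, by push_cast; ring⟩
  | mul x y _ _ hx hy =>
    obtain ⟨⟨a, b, rfl⟩, c, d, rfl⟩ := And.intro hx hy
    exact ⟨a * c - b * d, a * d + b * c - b * d, by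
      push_cast; linear_combination (b * d : R) * hω⟩

lemma lagrangeResolvent_cube_sub_cube {ω : R} (hω : 1 + ω + ω ^ 2 = 0) (x y z : R) :
    (x + ω * y + ω ^ 2 * z) ^ 3 - (x + ω ^ 2 * y + ω * z) ^ 3 =
      3 * (ω - ω ^ 2) * ((x - y) * (x - z) * (y - z)) := by
  have hω2 : ω ^ 2 = -1 - ω := by linear_combination hω
  rw [hω2]
  linear_combination (2 * ω + 1) * (y - z) ^ 3 * hω

lemma prod_sub_eq_sub_sub_cube_sub_cube [CharP R 3] {x y z : R} (h : x + y + z = -1) :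
    (x - y) * (x - z) * (y - z) = (x - y) - (x ^ 3 - y ^ 3) := by
  have three_eq_zero : (3 : R) = 0 := mod_cast CharP.cast_eq_zero R 3
  obtain rfl : z = -1 - x - y := by linear_combination h
  linear_combination
    (x ^ 3 - y ^ 3 + x ^ 2 * y - x * y ^ 2 + x ^ 2 - y ^ 2) * three_eq_zero

end CubicIdentities

section CubicCharacter

variable {F R : Type*} [Field F] [Fintype F] [CommRing R] [IsDomain R] {ω : R}
  {χ : MulChar F R} {ψ : AddChar F R}

/-- The product of the differences of the three periods of a cubic character, a square root of the
discriminant of the polynomial whose roots are these periods. -/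
noncomputable def periodDifferenceProduct (χ : MulChar F R) (ψ : AddChar F R) (ω : R) : R :=
  (gaussPeriod χ ψ 1 - gaussPeriod χ ψ ω) * (gaussPeriod χ ψ 1 - gaussPeriod χ ψ (ω ^ 2)) *
    (gaussPeriod χ ψ ω - gaussPeriod χ ψ (ω ^ 2))

lemma gaussPeriod_add_add_eq_neg_one (hω : IsPrimitiveRoot ω 3) (hχ : orderOf χ = 3)
    (hψ : ψ.IsPrimitive) :
    gaussPeriod χ ψ 1 + gaussPeriod χ ψ ω + gaussPeriod χ ψ (ω ^ 2) = -1 := by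
  have hψ1 : ψ ≠ 1 := by simpa using hψ one_ne_zero
  have hχ3 := orderOf_dvd_iff_pow_eq_one.mp hχ.dvd
  have h := gaussSum_pow_eq_sum_gaussPeriod hχ3 three_ne_zero hω ψ
  rw [hχ3, gaussSum_one_left hψ1] at h
  simpa [sum_range_succ, pow_right_comm ω _ 3, hω.pow_eq_one] using h.symm

lemma gaussSum_pow_three (hχ : orderOf χ = 3) (hψ : ψ.IsPrimitive) :
    gaussSum χ ψ ^ 3 = Fintype.card F * jacobiSum χ χ := by
  have h := gaussSum_pow_eq_prod_jacobiSum (by omega) hψ (χ := χ)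
  have hχ3 := orderOf_dvd_iff_pow_eq_one.mp hχ.dvd
  rw [MulChar.val_neg_one_eq_one_of_odd_order (by decide) hχ3, hχ] at h
  simpa using h

lemma exists_jacobiSum_eq_add_three_mul (hω : IsPrimitiveRoot ω 3) (hχ : orderOf χ = 3) :
    ∃ a v : ℤ, jacobiSum χ χ = a + (3 * v : ℤ) * ω := by
  have hω' := one_add_self_add_sq_eq_zero hω
  have hχ3 := orderOf_dvd_iff_pow_eq_one.mp hχ.dvd
  obtain ⟨z, hz, hJ⟩ := exists_jacobiSum_eq_neg_one_add (by norm_num) hχ3 hχ3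
    (hχ ▸ χ.orderOf_dvd_card_sub_one) hω
  obtain ⟨c, d, rfl⟩ := exists_eq_add_mul_of_mem_adjoin hω' hz
  refine ⟨3 * d - 1, d - c, ?_⟩
  push_cast
  linear_combination hJ + (c + d * ω - 3 * d : R) * hω'

lemma jacobiSum_sq_eq (hω : IsPrimitiveRoot ω 3) (hχ : orderOf χ = 3) {σ : R →+* R}
    (hσ : σ ω = ω ^ 2) {a b : ℤ} (hJ : jacobiSum χ χ = a + b * ω) :
    jacobiSum (χ ^ 2) (χ ^ 2) = a + b * ω ^ 2 := by
  have ringHomComp_eq : χ.ringHomComp σ = χ ^ 2 := by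
    ext u
    obtain ⟨k, -, hk⟩ :=
      MulChar.exists_apply_eq_pow (orderOf_dvd_iff_pow_eq_one.mp hχ.dvd) hω u.ne_zero
    rw [MulChar.ringHomComp_apply, MulChar.pow_apply_coe, hk, map_pow, hσ, pow_right_comm]
  rw [← ringHomComp_eq, jacobiSum_ringHomComp, hJ]
  simp [hσ]

lemma card_eq_of_jacobiSum_eq [CharZero R] (hω : IsPrimitiveRoot ω 3) (hχ : orderOf χ = 3)
    {σ : R →+* R} (hσ : σ ω = ω ^ 2) {a b : ℤ} (hJ : jacobiSum χ χ = a + b * ω) :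
    (Fintype.card F : ℤ) = a ^ 2 - a * b + b ^ 2 := by
  have hχ1 : χ ≠ 1 := by
    rintro rfl
    simp at hχ
  have hχ_inv : χ⁻¹ = χ ^ 2 := by
    rw [inv_eq_iff_mul_eq_one, ← pow_succ', orderOf_dvd_iff_pow_eq_one.mp hχ.dvd]
  have hχχ : χ * χ ≠ 1 := by rwa [← pow_two, ← hχ_inv, inv_ne_one]
  have h := jacobiSum_mul_jacobiSum_inv_of_isDomain hχ1 hχ1 hχχ
  rw [hχ_inv, jacobiSum_sq_eq hω hχ hσ hJ, hJ] at h
  have : (Fintype.card F : R) = a ^ 2 - a * b + b ^ 2 := by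
    linear_combination -h + (a * b : R) * one_add_self_add_sq_eq_zero hω
      + (b : R) ^ 2 * hω.pow_eq_one
  exact_mod_cast this

lemma card_mul_eq_three_mul_periodDifferenceProduct (hω : IsPrimitiveRoot ω 3)
    (hχ : orderOf χ = 3) (hψ : ψ.IsPrimitive) {σ : R →+* R} (hσ : σ ω = ω ^ 2) {a b : ℤ}
    (hJ : jacobiSum χ χ = a + b * ω) :
    (Fintype.card F : R) * b = 3 * periodDifferenceProduct χ ψ ω := by
  have hχ3 := orderOf_dvd_iff_pow_eq_one.mp hχ.dvd
  have hχ_sq : orderOf (χ ^ 2) = 3 := by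
    rw [Nat.Coprime.orderOf_pow (by rw [hχ]; norm_num), hχ]
  have hω_ne : ω - ω ^ 2 ≠ 0 := by
    rw [sub_ne_zero, ← pow_one ω, ← pow_mul]
    exact fun h ↦ absurd (hω.pow_inj (by norm_num) (by norm_num) h) (by norm_num)
  have gaussSum_eq : gaussSum χ ψ =
      gaussPeriod χ ψ 1 + ω * gaussPeriod χ ψ ω + ω ^ 2 * gaussPeriod χ ψ (ω ^ 2) := by
    simpa [sum_range_succ] using gaussSum_pow_eq_sum_gaussPeriod hχ3 one_ne_zero hω ψ
  have gaussSum_sq_eq : gaussSum (χ ^ 2) ψ =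
      gaussPeriod χ ψ 1 + ω ^ 2 * gaussPeriod χ ψ ω + ω * gaussPeriod χ ψ (ω ^ 2) := by
    have hω4 : (ω ^ 2) ^ 2 = ω := by linear_combination ω * hω.pow_eq_one
    simpa [sum_range_succ, hω4] using gaussSum_pow_eq_sum_gaussPeriod hχ3 two_ne_zero hω ψ
  apply mul_left_cancel₀ hω_ne
  calc (ω - ω ^ 2) * ((Fintype.card F : R) * b)
      = gaussSum χ ψ ^ 3 - gaussSum (χ ^ 2) ψ ^ 3 := by
        rw [gaussSum_pow_three hχ hψ, gaussSum_pow_three hχ_sq hψ,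
          jacobiSum_sq_eq hω hχ hσ hJ, hJ]
        ring
    _ = (ω - ω ^ 2) * (3 * periodDifferenceProduct χ ψ ω) := by
        rw [gaussSum_eq, gaussSum_sq_eq,
          lagrangeResolvent_cube_sub_cube (one_add_self_add_sq_eq_zero hω), periodDifferenceProduct]
        ring

lemma map_periodDifferenceProduct_eq_zero_iff {S : Type*} [CommRing S] [CharP S 3] (φ : R →+* S)
    (hω : IsPrimitiveRoot ω 3) (hχ : orderOf χ = 3) (hψ : ψ.IsPrimitive) :
    φ (periodDifferenceProduct χ ψ ω) = 0 ↔ χ 3 = 1 := by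
  have : Fact (Nat.Prime 3) := ⟨Nat.prime_three⟩
  have : Nontrivial S := CharP.nontrivial_of_char_ne_one (v := 3) (by norm_num)
  have h3 : (3 : F) ≠ 0 := by simpa [hχ] using natCast_orderOf_mulChar_ne_zero χ
  have frobenius (c : R) : φ (gaussPeriod χ ψ c) ^ 3 = φ (gaussPeriod χ ψ (c * χ 3)) := by
    simpa only [map_gaussPeriod, Nat.cast_ofNat] using
      gaussPeriod_pow_char 3 (by simpa using h3) χ ((φ : R →* S).compAddChar ψ) c
  have sum_eq :
      φ (gaussPeriod χ ψ 1) + φ (gaussPeriod χ ψ ω) + φ (gaussPeriod χ ψ (ω ^ 2)) = -1 := by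
    simpa using congrArg φ (gaussPeriod_add_add_eq_neg_one hω hχ hψ)
  have prod_eq : φ (periodDifferenceProduct χ ψ ω) =
      φ (gaussPeriod χ ψ 1) - φ (gaussPeriod χ ψ ω) -
        (φ (gaussPeriod χ ψ (χ 3)) - φ (gaussPeriod χ ψ (ω * χ 3))) := by
    simpa [periodDifferenceProduct, frobenius] using prod_sub_eq_sub_sub_cube_sub_cube sum_eq
  have three_eq_zero : (3 : S) = 0 := mod_cast CharP.cast_eq_zero S 3
  obtain ⟨k, hk, hχ3⟩ := MulChar.exists_apply_eq_pow (orderOf_dvd_iff_pow_eq_one.mp hχ.dvd) hω h3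
  rw [prod_eq, hχ3]
  interval_cases k
  · simp
  · have hω1 : ω ^ 1 ≠ 1 := hω.pow_ne_one_of_pos_of_lt one_ne_zero (by norm_num)
    refine iff_of_false (fun h ↦ one_ne_zero (α := S) ?_) hω1
    rw [pow_one, ← pow_two] at h
    linear_combination -h + sum_eq - φ (gaussPeriod χ ψ ω) * three_eq_zero
  · have hω2 : ω ^ 2 ≠ 1 := hω.pow_ne_one_of_pos_of_lt two_ne_zero (by norm_num)
    refine iff_of_false (fun h ↦ one_ne_zero (α := S) ?_) hω2
    rw [← pow_succ', hω.pow_eq_one] at h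
    linear_combination h + sum_eq - φ (gaussPeriod χ ψ 1) * three_eq_zero

theorem apply_three_eq_one_iff_three_dvd {S : Type*} [CommRing S] [CharP S 3] (φ : R →+* S)
    (hω : IsPrimitiveRoot ω 3) (hχ : orderOf χ = 3) (hψ : ψ.IsPrimitive) {σ : R →+* R}
    (hσ : σ ω = ω ^ 2) {a v : ℤ} (hJ : jacobiSum χ χ = a + (3 * v : ℤ) * ω) :
    χ 3 = 1 ↔ 3 ∣ v := by
  have three_ne_zero : (3 : R) ≠ 0 := mod_cast (hω.neZero' (n := 3)).ne
  have prod_eq : periodDifferenceProduct χ ψ ω = Fintype.card F * v := by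
    apply mul_left_cancel₀ three_ne_zero
    rw [← card_mul_eq_three_mul_periodDifferenceProduct hω hχ hψ hσ hJ]
    push_cast
    ring
  rw [← map_periodDifferenceProduct_eq_zero_iff φ hω hχ hψ, prod_eq, map_mul, map_natCast,
    map_intCast, natCast_card_eq_one_of_orderOf_mulChar_eq hχ, one_mul]
  exact CharP.intCast_eq_zero_iff S 3 v

end CubicCharacter

lemma exists_isPrimitiveRoot_integralClosure (n : ℕ) [NeZero n] :
    ∃ ζ : integralClosure ℤ ℂ, IsPrimitiveRoot ζ n :=
  have hζ := Complex.isPrimitiveRoot_exp n (NeZero.ne n)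
  ⟨⟨_, hζ.isIntegral (NeZero.pos n)⟩, IsPrimitiveRoot.coe_submonoidClass_iff.mp hζ⟩

lemma exists_ringHom_integralClosure_apply_eq_sq {ω : integralClosure ℤ ℂ}
    (hω : IsPrimitiveRoot ω 3) :
    ∃ σ : integralClosure ℤ ℂ →+* integralClosure ℤ ℂ, σ ω = ω ^ 2 := by
  refine ⟨((Complex.conjAe : ℂ →ₐ[ℝ] ℂ).restrictScalars ℤ).mapIntegralClosure, ?_⟩
  have hω3 : (ω : ℂ) ^ 3 = 1 := mod_cast congrArg Subtype.val hω.pow_eq_one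
  have hconj : (ω : ℂ)⁻¹ = starRingEnd ℂ ω :=
    Complex.inv_eq_conj (Complex.norm_eq_one_of_pow_eq_one hω3 three_ne_zero)
  have hinv : (ω : ℂ)⁻¹ = (ω : ℂ) ^ 2 := inv_eq_of_mul_eq_one_right (by rw [← pow_succ', hω3])
  ext
  exact hconj.symm.trans hinv

lemma exists_charP_quotient_integralClosure (q : ℕ) [hq : Fact q.Prime] :
    ∃ I : Ideal (integralClosure ℤ ℂ), CharP (integralClosure ℤ ℂ ⧸ I) q := by
  refine ⟨_, CharP.quotient _ q ?_⟩
  rw [mem_nonunits_iff, ← map_natCast (algebraMap ℤ (integralClosure ℤ ℂ)), isUnit_map_iff]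
  exact (Nat.prime_iff_prime_int.mp hq.out).not_isUnit

theorem exists_four_mul_prime_eq_and_cube_eq_three_iff (p : ℕ) [Fact p.Prime] (hp3 : p % 3 = 1) :
    ∃ l v : ℤ, (4 * p : ℤ) = l ^ 2 + 27 * v ^ 2 ∧ ((∃ x : ZMod p, x ^ 3 = 3) ↔ 3 ∣ v) := by
  obtain ⟨ω, hω⟩ := exists_isPrimitiveRoot_integralClosure 3
  obtain ⟨σ, hσ⟩ := exists_ringHom_integralClosure_apply_eq_sq hω
  obtain ⟨ζ, hζ⟩ := exists_isPrimitiveRoot_integralClosure p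
  have hψ := AddChar.zmodChar_primitive_of_primitive_root p hζ
  obtain ⟨χ, hχ⟩ := MulChar.exists_mulChar_orderOf (ZMod p) (n := 3) (by rw [ZMod.card]; omega) hω
  obtain ⟨a, v, hJ⟩ := exists_jacobiSum_eq_add_three_mul hω hχ
  have hnorm := card_eq_of_jacobiSum_eq hω hχ hσ hJ
  rw [ZMod.card] at hnorm
  refine ⟨2 * a - 3 * v, v, by linear_combination 4 * hnorm, ?_⟩
  have h3 : (3 : ZMod p) ≠ 0 := by simpa [hχ] using natCast_orderOf_mulChar_ne_zero χ
  have : Fact (Nat.Prime 3) := ⟨Nat.prime_three⟩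
  obtain ⟨I, hI⟩ := exists_charP_quotient_integralClosure 3
  rw [← apply_three_eq_one_iff_three_dvd (Ideal.Quotient.mk I) hω hχ hψ hσ hJ,
    ← exists_pow_orderOf_eq_iff_mulChar_apply_eq_one χ h3, hχ]

lemma exists_int_pow_modEq_iff {p : ℕ} (n : ℕ) (c : ℤ) :
    (∃ x : ℤ, x ^ n ≡ c [ZMOD p]) ↔ ∃ x : ZMod p, x ^ n = c := by
  simp [(ZMod.intCast_surjective (n := p)).exists, ← ZMod.intCast_eq_intCast_iff]

/-- For a prime `p ≡ 1 (mod 3)` with `4p = L² + 27M²`,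
`3` is a cubic residue mod `p` iff `3 ∣ M`. -/
theorem three_cubic_residue_iff (p : ℕ) (hp : p.Prime) (hp3 : p % 3 = 1)
    (L M : ℤ) (h : (4 * p : ℤ) = L ^ 2 + 27 * M ^ 2) :
    (∃ x : ℤ, x ^ 3 ≡ 3 [ZMOD (p : ℤ)]) ↔ (3 : ℤ) ∣ M := by
  have : Fact p.Prime := ⟨hp⟩
  obtain ⟨l, v, hlv, hcube⟩ := exists_four_mul_prime_eq_and_cube_eq_three_iff p hp3
  have hsq : v ^ 2 = M ^ 2 := sq_eq_sq_of_mul_prime_eq_sq_add_mul_sq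
    (Nat.prime_iff_prime_int.mp hp) (by norm_num) (by norm_num) h hlv
  rw [exists_int_pow_modEq_iff, Int.cast_ofNat, hcube,
    ← Int.prime_three.dvd_pow_iff_dvd two_ne_zero, hsq, Int.prime_three.dvd_pow_iff_dvd two_ne_zero]
end
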